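/- arXiv:2412.20825 — 2 statements merged into one kernel-verified Lean document; each statement's English description precedes it below -/
import Mathlib

section
/- Let f : Λ(n)³ → ℤ satisfy the Duistermaat axioms. Then for any Lagrangian planes L₁, L₂, L₃: f(L₁,L₂,L₃) − dim(L₁ ∩ L₃) = f(L₃,L₁,L₂) − dim(L₂ ∩ L₃) = f(L₂,L₃,L₁) − dim(L₁ ∩ L₂). -/
/-!
Write `d(a, b) = f(a, b, a)`. The cocycle identity for `(a, b, c, a)` reads
`f(b, c, a) = f(a, b, c) - d(a, b) + d(a, c)`, so both equalities follow once
`d(a, b) = n - dim (a ∩ b)` is known (`index_self`).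

To compute `d(a, b)`, note that the planes `{(x, t x)}`, `t` real, which meet a given Lagrangian
plane nontrivially are finite in number, because the intersection vectors for different `t` are
orthogonal (`finite_bad`). Hence some `{(x, t x)}` is transversal to both `a` and `b`, and an
explicit symplectic map (`rotMap`) carries it to `G_∞`. The images of `a` and `b` are then graphs
of Hermitian matrices `A` and `B` (`exists_graph`). A symplectic shear and the normalization axiom
give `f(G_A, G_B, G_∞) = n_-(B - A)` (`index_graph`), and the cocycle identity for
`(G_A, G_B, G_A, G_∞)` gives `d(a, b) = n_-(B - A) + n_-(A - B)`. By Sylvester's law of inertia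
this is the rank of `B - A`, i.e. `n - dim ker (B - A) = n - dim (a ∩ b)`.
-/


open Matrix

/-- The Hermitian symplectic space `ℂⁿ ⊕ ℂⁿ`. -/
abbrev SympSpace (n : ℕ) := (Fin n → ℂ) × (Fin n → ℂ)

/-- The symplectic form `ω((x₁,x₂),(y₁,y₂)) = ⟨x₁,y₂⟩ − ⟨x₂,y₁⟩`. -/
noncomputable def omegaForm {n : ℕ} (u v : SympSpace n) : ℂ :=
  star u.1 ⬝ᵥ v.2 - star u.2 ⬝ᵥ v.1

/-- A subspace is Lagrangian iff it coincides with its symplectic complement. -/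
def IsLagrangian {n : ℕ} (L : Submodule ℂ (SympSpace n)) : Prop :=
  ∀ v, v ∈ L ↔ ∀ u ∈ L, omegaForm u v = 0

/-- The Lagrangian Grassmannian `Λ(n)`. -/
abbrev LagGr (n : ℕ) := {L : Submodule ℂ (SympSpace n) // IsLagrangian L}

/-- The graph `G_M = {(x, Mx)}` of a matrix `M`. -/
noncomputable def graphOf {n : ℕ} (M : Matrix (Fin n) (Fin n) ℂ) :
    Submodule ℂ (SympSpace n) := LinearMap.graph M.mulVecLin

/-- The vertical subspace `G_∞ = 0 ⊕ ℂⁿ`. -/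
noncomputable def vertSub (n : ℕ) : Submodule ℂ (SympSpace n) :=
  (⊥ : Submodule ℂ (Fin n → ℂ)).prod (⊤ : Submodule ℂ (Fin n → ℂ))

/-- The negative index (Morse index) of a sesquilinear form: the maximal dimension of a
subspace on which it is negative definite. -/
noncomputable def formNegIdx {V : Type*} [AddCommGroup V] [Module ℂ V]
    (Q : V → V → ℂ) : ℕ :=
  sSup {d : ℕ | ∃ W : Submodule ℂ V, Module.finrank ℂ W = d ∧
    ∀ x ∈ W, x ≠ 0 → (Q x x).re < 0}

/-- The number of negative eigenvalues (Morse index) of a Hermitian matrix, as the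
maximal dimension of a subspace on which the associated form is negative definite. -/
noncomputable def negIdxM {n : ℕ} (A : Matrix (Fin n) (Fin n) ℂ) : ℕ :=
  formNegIdx (fun x y : Fin n → ℂ => star x ⬝ᵥ A.mulVec y)

/-- A symplectic transformation: a bijective linear map preserving `ω`. -/
def IsSymplecticMap {n : ℕ} (S : SympSpace n ≃ₗ[ℂ] SympSpace n) : Prop :=
  ∀ u v, omegaForm (S u) (S v) = omegaForm u v

/-- The Duistermaat axioms for `f : Λ(n)³ → ℤ`: normalization, symplectic invariance
and the cocycle property. -/
def SatisfiesDuiAxioms {n : ℕ} (f : LagGr n → LagGr n → LagGr n → ℤ) : Prop :=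
  (∀ (A : Matrix (Fin n) (Fin n) ℂ), A.IsHermitian →
    ∀ L₁ L₂ L₃ : LagGr n,
      L₁.val = graphOf (0 : Matrix (Fin n) (Fin n) ℂ) →
      L₂.val = graphOf A → L₃.val = vertSub n →
      f L₁ L₂ L₃ = negIdxM A) ∧
  (∀ S : SympSpace n ≃ₗ[ℂ] SympSpace n, IsSymplecticMap S →
    ∀ L₁ L₂ L₃ M₁ M₂ M₃ : LagGr n,
      M₁.val = (L₁.val).map S.toLinearMap →
      M₂.val = (L₂.val).map S.toLinearMap →
      M₃.val = (L₃.val).map S.toLinearMap →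
      f M₁ M₂ M₃ = f L₁ L₂ L₃) ∧
  (∀ L₁ L₂ L₃ L₄ : LagGr n,
    f L₁ L₂ L₃ - f L₁ L₂ L₄ + f L₁ L₃ L₄ - f L₂ L₃ L₄ = 0)

/-! ### Inertia of Hermitian matrices -/

/-- Sylvester's law: the maximal dimension of a negative definite subspace is the number of
negative entries in any unitary diagonalization. -/
lemma negIdxM_eq_card {n : ℕ} (C U : Matrix (Fin n) (Fin n) ℂ) (l : Fin n → ℝ)
    (hU : U * Uᴴ = 1) (hC : C = U * diagonal (fun i => (l i : ℂ)) * Uᴴ) :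
    negIdxM C = Fintype.card {i // l i < 0} := by
  have hU' : Uᴴ * U = 1 := mul_eq_one_comm.mp hU
  have hQ : ∀ x : Fin n → ℂ, (star x ⬝ᵥ C.mulVec x).re
      = ∑ i, l i * Complex.normSq ((Uᴴ *ᵥ x) i) := by
    intro x
    have h1 : star x ⬝ᵥ C.mulVec x
        = star (Uᴴ *ᵥ x) ⬝ᵥ (diagonal (fun i => (l i : ℂ)) *ᵥ (Uᴴ *ᵥ x)) := by
      rw [hC, star_mulVec, conjTranspose_conjTranspose, ← mulVec_mulVec, ← mulVec_mulVec,
        dotProduct_mulVec]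
    rw [h1]
    simp only [dotProduct, mulVec_diagonal, Complex.re_sum, Pi.star_apply]
    refine Finset.sum_congr rfl fun i _ => ?_
    simp [Complex.normSq_apply]
    ring
  unfold negIdxM formNegIdx
  apply IsGreatest.csSup_eq
  constructor
  · let E : ({i // l i < 0} → ℂ) →ₗ[ℂ] (Fin n → ℂ) :=
      { toFun := fun y i => if h : l i < 0 then y ⟨i, h⟩ else 0
        map_add' := by
          intro x y; ext i; by_cases h : l i < 0 <;> simp [h]
        map_smul' := by
          intro x y; ext i; by_cases h : l i < 0 <;> simp [h] }
    have hE : ∀ y (i : {i // l i < 0}), E y i.1 = y i := by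
      intro y i; simp [E, i.2]
    have hE0 : ∀ y i, ¬ l i < 0 → E y i = 0 := by
      intro y i h; simp [E, h]
    have hUE : ∀ y, Uᴴ *ᵥ (U *ᵥ E y) = E y := by
      intro y; rw [mulVec_mulVec, hU', one_mulVec]
    have hinj : Function.Injective (U.mulVecLin ∘ₗ E) := by
      intro y z h
      have h2 : E y = E z := by
        rw [← hUE y, ← hUE z]; exact congrArg _ h
      ext i
      rw [← hE y i, h2, hE]
    refine ⟨LinearMap.range (U.mulVecLin ∘ₗ E), ?_, ?_⟩
    · rw [LinearMap.finrank_range_of_inj hinj, Module.finrank_fintype_fun_eq_card]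
    · rintro _ ⟨y, rfl⟩ hne
      have hy : y ≠ 0 := by rintro rfl; exact hne (map_zero _)
      obtain ⟨i, hi⟩ := Function.ne_iff.mp hy
      simp only [hQ]
      have hs : (U.mulVecLin ∘ₗ E) y = U *ᵥ E y := rfl
      rw [hs, hUE]
      apply Finset.sum_neg'
      · intro j _
        by_cases hj : l j < 0
        · exact mul_nonpos_of_nonpos_of_nonneg hj.le (Complex.normSq_nonneg _)
        · simp [hE0 y j hj]
      · refine ⟨i.1, Finset.mem_univ _, ?_⟩
        rw [hE]
        exact mul_neg_of_neg_of_pos i.2 (Complex.normSq_pos.mpr hi)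
  · rintro d ⟨W, rfl, hW⟩
    -- The coordinates with negative weight separate the points of a negative definite subspace.
    let R : W →ₗ[ℂ] ({i // l i < 0} → ℂ) :=
      (LinearMap.funLeft ℂ ℂ Subtype.val) ∘ₗ (Uᴴ).mulVecLin ∘ₗ W.subtype
    have hR : Function.Injective R := by
      rw [injective_iff_map_eq_zero]
      intro w hw
      by_contra hne
      have h1 := hW w.1 w.2 (by simpa using hne)
      simp only [hQ] at h1
      refine absurd h1 (not_lt.mpr (Finset.sum_nonneg fun j _ => ?_))
      by_cases hj : l j < 0
      · have h3 : (Uᴴ *ᵥ w.1) j = 0 := congrFun hw ⟨j, hj⟩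
        simp [h3]
      · exact mul_nonneg (not_lt.mp hj) (Complex.normSq_nonneg _)
    have := LinearMap.finrank_le_finrank_of_injective hR
    rwa [Module.finrank_fintype_fun_eq_card] at this

lemma negIdxM_add_neg {n : ℕ} (C : Matrix (Fin n) (Fin n) ℂ) (hC : C.IsHermitian) :
    negIdxM C + negIdxM (-C) = C.rank := by
  let U : Matrix (Fin n) (Fin n) ℂ := hC.eigenvectorUnitary.1
  have hU : U * Uᴴ = 1 := Unitary.coe_mul_star_self hC.eigenvectorUnitary
  have hspec : C = U * diagonal (fun i => (hC.eigenvalues i : ℂ)) * Uᴴ := by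
    have := hC.spectral_theorem
    rw [Unitary.conjStarAlgAut_apply] at this
    exact this
  have hneg : -C = U * diagonal (fun i => ((-hC.eigenvalues i : ℝ) : ℂ)) * Uᴴ := by
    have : diagonal (fun i => ((-hC.eigenvalues i : ℝ) : ℂ))
        = - diagonal (fun i => (hC.eigenvalues i : ℂ)) := by
      rw [diagonal_neg]; congr 1; ext i; simp
    rw [this, mul_neg, neg_mul, ← hspec]
  rw [negIdxM_eq_card C U hC.eigenvalues hU hspec,
    negIdxM_eq_card (-C) U (fun i => -hC.eigenvalues i) hU hneg,
    hC.rank_eq_card_non_zero_eigs, Fintype.card_subtype, Fintype.card_subtype,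
    Fintype.card_subtype, ← Finset.card_union_of_disjoint]
  · congr 1
    ext i
    simp only [Finset.mem_union, Finset.mem_filter, Finset.mem_univ, true_and, neg_lt_zero]
    exact lt_or_lt_iff_ne
  · rw [Finset.disjoint_filter]
    intro i _ h1 h2
    linarith

/-! ### Lagrangian planes and symplectic maps -/

/-- The image of a Lagrangian plane under a symplectic map. -/
noncomputable def mapLag {n : ℕ} (S : SympSpace n ≃ₗ[ℂ] SympSpace n) (hS : IsSymplecticMap S)
    (L : LagGr n) : LagGr n :=
  ⟨L.val.map S.toLinearMap, by
    intro v
    obtain ⟨w, rfl⟩ := S.surjective v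
    have h1 : S w ∈ L.val.map S.toLinearMap ↔ w ∈ L.val := by
      constructor
      · rintro ⟨x, hx, hxw⟩
        rwa [← S.injective hxw]
      · exact fun h => ⟨w, h, rfl⟩
    rw [h1, L.2 w]
    constructor
    · rintro h _ ⟨x, hx, rfl⟩
      exact (hS x w).trans (h x hx)
    · intro h u hu
      rw [← hS u w]
      exact h _ ⟨u, hu, rfl⟩⟩

lemma mem_graphOf {n : ℕ} {M : Matrix (Fin n) (Fin n) ℂ} {v : SympSpace n} :
    v ∈ graphOf M ↔ v.2 = M *ᵥ v.1 := by
  simp [graphOf, LinearMap.mem_graph_iff]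

lemma mem_vertSub {n : ℕ} {v : SympSpace n} : v ∈ vertSub n ↔ v.1 = 0 := by
  simp [vertSub, Submodule.mem_prod]

lemma isLagrangian_vertSub (n : ℕ) : IsLagrangian (vertSub n) := by
  intro v
  rw [mem_vertSub]
  constructor
  · intro hv u hu
    rw [mem_vertSub] at hu
    simp [omegaForm, hu, hv]
  · intro h
    ext i
    have := h (0, Pi.single i 1) (mem_vertSub.mpr rfl)
    simp only [omegaForm] at this
    rw [← Pi.single_star] at this
    simpa using this

lemma isHermitian_of_graph {n : ℕ} {A : Matrix (Fin n) (Fin n) ℂ}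
    (h : IsLagrangian (graphOf A)) : A.IsHermitian := by
  have key : ∀ x y : Fin n → ℂ, star x ⬝ᵥ (A *ᵥ y) = star x ⬝ᵥ (Aᴴ *ᵥ y) := by
    intro x y
    have h1 := (h (y, A *ᵥ y)).mp (mem_graphOf.mpr rfl) (x, A *ᵥ x) (mem_graphOf.mpr rfl)
    simp only [omegaForm] at h1
    rw [sub_eq_zero.mp h1, star_mulVec, dotProduct_mulVec]
  ext i j
  have := key (Pi.single i 1) (Pi.single j 1)
  rw [← Pi.single_star] at this
  simpa using this.symm

/-- A Lagrangian plane transversal to `G_∞` is a graph. -/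
lemma exists_graph {n : ℕ} (L : LagGr n) (h : ∀ v ∈ L.val, v.1 = 0 → v = 0) :
    ∃ A : Matrix (Fin n) (Fin n) ℂ, L.val = graphOf A := by
  let p : L.val →ₗ[ℂ] (Fin n → ℂ) := LinearMap.fst ℂ _ _ ∘ₗ L.val.subtype
  have hinj : Function.Injective p := by
    rw [injective_iff_map_eq_zero]
    intro v hv
    exact Subtype.ext (h v.1 v.2 hv)
  have hsurj : Function.Surjective p := by
    rw [← LinearMap.range_eq_top]
    by_contra hne
    -- A vector `z` orthogonal to the range yields the element `(0, z)` of `L^ω = L`.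
    obtain ⟨g, hg0, hg⟩ := Submodule.exists_le_ker_of_lt_top _ (lt_top_iff_ne_top.mpr hne)
    let z : Fin n → ℂ := fun i => g (Pi.single i 1)
    have hgz : ∀ x, g x = x ⬝ᵥ z := by
      intro x
      conv_lhs => rw [← Finset.univ_sum_single x, map_sum]
      refine Finset.sum_congr rfl fun i _ => ?_
      have : (Pi.single i (x i) : Fin n → ℂ) = x i • Pi.single i 1 := by
        rw [← Pi.single_smul]; simp
      rw [this, map_smul, smul_eq_mul]
    have hmem : ((0, star z) : SympSpace n) ∈ L.val := by
      rw [L.2]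
      intro u hu
      have h1 : g u.1 = 0 := hg ⟨⟨u, hu⟩, rfl⟩
      rw [hgz] at h1
      have h2 : star u.1 ⬝ᵥ star z = 0 := by
        rw [star_dotProduct_star, dotProduct_comm, h1, star_zero]
      simp [omegaForm, h2]
    have hz := congrArg Prod.snd (h _ hmem rfl)
    have hz' : z = 0 := by simpa using hz
    apply hg0
    ext x
    simp [hgz, hz']
  let e := LinearEquiv.ofBijective p ⟨hinj, hsurj⟩
  let T : (Fin n → ℂ) →ₗ[ℂ] (Fin n → ℂ) :=
    LinearMap.snd ℂ _ _ ∘ₗ L.val.subtype ∘ₗ e.symm.toLinearMap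
  have hT : ∀ v : L.val, T v.1.1 = v.1.2 := by
    intro v
    have : e.symm v.1.1 = v := e.symm_apply_apply v
    simp [T, this]
  refine ⟨LinearMap.toMatrix' T, ?_⟩
  ext v
  rw [mem_graphOf, LinearMap.toMatrix'_mulVec]
  constructor
  · intro hv
    exact (hT ⟨v, hv⟩).symm
  · intro hv
    obtain ⟨w, hw⟩ := hsurj v.1
    have hw' : w.1.1 = v.1 := hw
    have : v = w.1 := by
      refine Prod.ext hw'.symm ?_
      rw [hv, ← hw', hT]
    rw [this]
    exact w.2

/-- The shear `(x, y) ↦ (x, y - A x)`, which carries `G_M` to `G_{M - A}`. -/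
noncomputable def shear {n : ℕ} (A : Matrix (Fin n) (Fin n) ℂ) :
    SympSpace n ≃ₗ[ℂ] SympSpace n where
  toFun v := (v.1, v.2 - A *ᵥ v.1)
  invFun v := (v.1, v.2 + A *ᵥ v.1)
  map_add' u v := by
    refine Prod.ext rfl ?_
    simp only [Prod.fst_add, Prod.snd_add, mulVec_add]
    abel
  map_smul' c v := by
    refine Prod.ext rfl ?_
    simp [mulVec_smul, smul_sub]
  left_inv v := by simp
  right_inv v := by simp

lemma shear_symp {n : ℕ} {A : Matrix (Fin n) (Fin n) ℂ} (hA : A.IsHermitian) :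
    IsSymplecticMap (shear A) := by
  intro u v
  have : star (A *ᵥ u.1) ⬝ᵥ v.1 = star u.1 ⬝ᵥ (A *ᵥ v.1) := by
    rw [star_mulVec, hA.eq, dotProduct_mulVec]
  simp [omegaForm, shear, dotProduct_sub, sub_dotProduct, this]

lemma map_shear_graph {n : ℕ} (A B : Matrix (Fin n) (Fin n) ℂ) :
    (graphOf B).map (shear A).toLinearMap = graphOf (B - A) := by
  ext v
  constructor
  · rintro ⟨w, hw, rfl⟩
    rw [SetLike.mem_coe, mem_graphOf] at hw
    rw [mem_graphOf]
    simp [shear, hw, sub_mulVec]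
  · intro hv
    rw [mem_graphOf] at hv
    refine ⟨(shear A).symm v, ?_, (shear A).apply_symm_apply v⟩
    rw [SetLike.mem_coe, mem_graphOf]
    change v.2 + A *ᵥ v.1 = B *ᵥ v.1
    rw [hv, sub_mulVec, sub_add_cancel]

lemma map_shear_vert {n : ℕ} (A : Matrix (Fin n) (Fin n) ℂ) :
    (vertSub n).map (shear A).toLinearMap = vertSub n := by
  ext v
  constructor
  · rintro ⟨w, hw, rfl⟩
    exact mem_vertSub.mpr (mem_vertSub.mp hw)
  · intro hv
    exact ⟨(shear A).symm v, mem_vertSub.mpr (mem_vertSub.mp hv), (shear A).apply_symm_apply v⟩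

/-- The map `(x, y) ↦ (t x - y, x)`, which carries the graph of the scalar `t` to `G_∞`. -/
noncomputable def rotMap (n : ℕ) (t : ℝ) : SympSpace n ≃ₗ[ℂ] SympSpace n where
  toFun v := ((t : ℂ) • v.1 - v.2, v.1)
  invFun v := (v.2, (t : ℂ) • v.2 - v.1)
  map_add' u v := by
    refine Prod.ext ?_ rfl
    simp only [Prod.fst_add, Prod.snd_add, smul_add]
    abel
  map_smul' c v := by
    refine Prod.ext ?_ rfl
    simp [smul_sub, smul_comm c t]
  left_inv v := by simp
  right_inv v := by simp

lemma rotMap_symp (n : ℕ) (t : ℝ) : IsSymplecticMap (rotMap n t) := by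
  intro u v
  simp [omegaForm, rotMap, dotProduct_sub, sub_dotProduct]

/-- Vectors of a Lagrangian plane lying on the graphs of different real scalars have orthogonal
first components, so only finitely many of these graphs meet the plane nontrivially. -/
lemma finite_bad {n : ℕ} (L : LagGr n) :
    {t : ℝ | ∃ x : Fin n → ℂ, x ≠ 0 ∧ ((x, (t : ℂ) • x) : SympSpace n) ∈ L.val}.Finite := by
  set B := {t : ℝ | ∃ x : Fin n → ℂ, x ≠ 0 ∧ ((x, (t : ℂ) • x) : SympSpace n) ∈ L.val}
  choose x hx0 hx using fun t : B => t.2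
  have hli : LinearIndependent ℂ (fun t : B => (WithLp.toLp 2 (x t) : EuclideanSpace ℂ (Fin n))) := by
    apply linearIndependent_of_ne_zero_of_inner_eq_zero
    · intro t ht
      exact hx0 t (by simpa using ht)
    · intro t s hts
      have h := (L.2 _).mp (hx s) _ (hx t)
      simp only [omegaForm, star_smul, dotProduct_smul, smul_dotProduct] at h
      have h' : ((s.1 : ℂ) - (t.1 : ℂ)) * (star (x t) ⬝ᵥ x s) = 0 := by
        rw [← h]; simp [sub_mul]
      rw [EuclideanSpace.inner_eq_star_dotProduct, dotProduct_comm]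
      refine (mul_eq_zero.mp h').resolve_left ?_
      intro h0
      exact hts (Subtype.ext (by exact_mod_cast (sub_eq_zero.mp h0).symm))
  have : Finite B := hli.finite
  exact Set.toFinite B

lemma finrank_graph_inf {n : ℕ} (A B : Matrix (Fin n) (Fin n) ℂ) :
    Module.finrank ℂ ↥(graphOf A ⊓ graphOf B) + (B - A).rank = n := by
  have hmem : graphOf A ⊓ graphOf B
      = (LinearMap.ker (B - A).mulVecLin).map (LinearMap.id.prod A.mulVecLin) := by
    ext v
    rw [Submodule.mem_inf, mem_graphOf, mem_graphOf, Submodule.mem_map]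
    constructor
    · rintro ⟨h1, h2⟩
      refine ⟨v.1, ?_, Prod.ext rfl h1.symm⟩
      rw [LinearMap.mem_ker, mulVecLin_apply, sub_mulVec, ← h1, ← h2, sub_self]
    · rintro ⟨x, hx, rfl⟩
      rw [LinearMap.mem_ker, mulVecLin_apply, sub_mulVec, sub_eq_zero] at hx
      exact ⟨rfl, hx.symm⟩
  have hinj : Function.Injective ((LinearMap.id : (Fin n → ℂ) →ₗ[ℂ] _).prod A.mulVecLin) :=
    fun x y h => congrArg Prod.fst h
  have h2 := LinearMap.finrank_range_add_finrank_ker (B - A).mulVecLin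
  rw [Module.finrank_fin_fun] at h2
  rw [hmem, (Submodule.equivMapOfInjective _ hinj _).symm.finrank_eq, Matrix.rank, add_comm]
  exact h2

/-! ### The index on graphs and on repeated arguments -/

lemma index_graph {n : ℕ} {f : LagGr n → LagGr n → LagGr n → ℤ} (hf : SatisfiesDuiAxioms f)
    {A B : Matrix (Fin n) (Fin n) ℂ} {a b c : LagGr n} (ha : a.val = graphOf A)
    (hb : b.val = graphOf B) (hc : c.val = vertSub n) : f a b c = negIdxM (B - A) := by
  have hA : A.IsHermitian := isHermitian_of_graph (ha ▸ a.2)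
  have hB : B.IsHermitian := isHermitian_of_graph (hb ▸ b.2)
  have hS := shear_symp hA
  rw [← hf.2.1 (shear A) hS a b c (mapLag _ hS a) (mapLag _ hS b) (mapLag _ hS c) rfl rfl rfl]
  apply hf.1 (B - A) (hB.sub hA)
  · change a.val.map _ = _
    rw [ha, map_shear_graph, sub_self]
  · change b.val.map _ = _
    rw [hb, map_shear_graph]
  · change c.val.map _ = _
    rw [hc, map_shear_vert]

/-- The value `f(a, b, a) = n - dim (a ∩ b)`. -/
lemma index_self {n : ℕ} {f : LagGr n → LagGr n → LagGr n → ℤ} (hf : SatisfiesDuiAxioms f)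
    (a b : LagGr n) : f a b a = n - Module.finrank ℂ ↥(a.val ⊓ b.val) := by
  obtain ⟨t, ht⟩ := ((finite_bad a).union (finite_bad b)).exists_notMem
  simp only [Set.mem_union, Set.mem_ofPred_eq, not_or, not_exists, not_and] at ht
  have hS := rotMap_symp n t
  have hgraph : ∀ L : LagGr n,
      (∀ x : Fin n → ℂ, x ≠ 0 → ((x, (t : ℂ) • x) : SympSpace n) ∉ L.val) →
      ∃ A : Matrix (Fin n) (Fin n) ℂ, (mapLag _ hS L).val = graphOf A := by
    intro L hL
    apply exists_graph
    rintro _ ⟨w, hw, rfl⟩ h0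
    have h1 : (t : ℂ) • w.1 - w.2 = 0 := h0
    have h2 : w = (w.1, (t : ℂ) • w.1) := Prod.ext rfl (sub_eq_zero.mp h1).symm
    have h3 : w.1 = 0 := by
      by_contra hne
      exact hL w.1 hne (h2 ▸ hw)
    have h4 : w = 0 := by
      rw [h2, h3, smul_zero]; rfl
    rw [h4, map_zero]
  obtain ⟨A, hA⟩ := hgraph a ht.1
  obtain ⟨B, hB⟩ := hgraph b ht.2
  have hAh : A.IsHermitian := isHermitian_of_graph (hA ▸ (mapLag _ hS a).2)
  have hBh : B.IsHermitian := isHermitian_of_graph (hB ▸ (mapLag _ hS b).2)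
  let c : LagGr n := ⟨vertSub n, isLagrangian_vertSub n⟩
  have hco := hf.2.2 (mapLag _ hS a) (mapLag _ hS b) (mapLag _ hS a) c
  rw [index_graph hf hA hB (c := c) rfl, index_graph hf hA hA (c := c) rfl,
    index_graph hf hB hA (c := c) rfl,
    hf.2.1 _ hS a b a _ _ _ rfl rfl rfl] at hco
  have h0 := negIdxM_add_neg (A - A) (hAh.sub hAh)
  rw [sub_self, rank_zero] at h0
  have h1 := negIdxM_add_neg (B - A) (hBh.sub hAh)
  rw [neg_sub] at h1
  have h2 := finrank_graph_inf A B
  have h3 : Module.finrank ℂ ↥(graphOf A ⊓ graphOf B)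
      = Module.finrank ℂ ↥(a.val ⊓ b.val) := by
    rw [← hA, ← hB]
    change Module.finrank ℂ ↥(a.val.map (rotMap n t).toLinearMap
      ⊓ b.val.map (rotMap n t).toLinearMap) = _
    rw [← Submodule.map_inf _ (rotMap n t).injective]
    exact (Submodule.equivMapOfInjective _ (rotMap n t).injective _).symm.finrank_eq
  rw [sub_self] at hco
  omega


/-- Cyclic shifts of the Duistermaat index. -/
theorem duistermaat_index_cyclic (n : ℕ) (hn : 1 ≤ n)
    (f : LagGr n → LagGr n → LagGr n → ℤ) (hf : SatisfiesDuiAxioms f)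
    (L₁ L₂ L₃ : LagGr n) :
    f L₁ L₂ L₃ - Module.finrank ℂ ↥(L₁.val ⊓ L₃.val)
      = f L₃ L₁ L₂ - Module.finrank ℂ ↥(L₂.val ⊓ L₃.val) ∧
    f L₁ L₂ L₃ - Module.finrank ℂ ↥(L₁.val ⊓ L₃.val)
      = f L₂ L₃ L₁ - Module.finrank ℂ ↥(L₁.val ⊓ L₂.val) := by
  have key : ∀ a b c : LagGr n, f a b c - Module.finrank ℂ ↥(a.val ⊓ c.val)
      = f b c a - Module.finrank ℂ ↥(a.val ⊓ b.val) := by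
    intro a b c
    have h := hf.2.2 a b c a
    rw [index_self hf a b, index_self hf a c] at h
    linarith
  refine ⟨?_, key L₁ L₂ L₃⟩
  have h := key L₃ L₁ L₂
  rw [inf_comm L₃.val, inf_comm L₃.val] at h
  exact h.symm
end

section
/- For any two pairs (L₁, L₂) and (M₁, M₂) of Lagrangian planes in ℂ^n ⊕ ℂ^n, there exists a symplectic transformation S with S L₁ = M₁ and S L₂ = M₂ if and only if dim(L₁ ∩ L₂) = dim(M₁ ∩ M₂). -/
/-!
The intersection dimension is clearly invariant. Conversely, every pair of Lagrangians `(L₁, L₂)`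
has a normal form depending only on how `W = L₁ ∩ L₂` sits in `L₁`.

Write `ω(u, v) = ⟨u, J v⟩` with `J (x, y) = (y, -x)`. Let `L₂'` be the orthogonal complement of `W`
in `L₂`. Then `N = L₂' ⊕ J W` is isotropic and meets `L₁` trivially, so `ω` pairs `L₁` and `N`
perfectly. Hence any linear coordinates `A : ℂⁿ ≃ L₁` extend to a symplectic isomorphism
`T : ℂⁿ ⊕ ℂⁿ → L₁ ⊕ N`, and since `L₂'` is the annihilator of `W` in `N`, one gets
`T⁻¹ L₂ = U ⊕ U^⊥` with `U = A⁻¹ W` (`exists_normal_form`). Given a second pair `(M₁, M₂)` with the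
same intersection dimension, coordinates on `L₁` and `M₁` can be chosen to give the same `U`,
and the composite of the two normal forms is the required map.
-/

open Matrix

/-! ### The symplectic form and the dimension of Lagrangians -/

section Form

open scoped ComplexOrder

variable {n : ℕ}

lemma omegaForm_add_left (u u' v : SympSpace n) :
    omegaForm (u + u') v = omegaForm u v + omegaForm u' v := by
  simp only [omegaForm, Prod.fst_add, Prod.snd_add, star_add, add_dotProduct]; ring

lemma omegaForm_add_right (u v v' : SympSpace n) :
    omegaForm u (v + v') = omegaForm u v + omegaForm u v' := by
  simp only [omegaForm, Prod.fst_add, Prod.snd_add, dotProduct_add]; ring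

lemma omegaForm_smul_right (u : SympSpace n) (c : ℂ) (v : SympSpace n) :
    omegaForm u (c • v) = c * omegaForm u v := by
  simp only [omegaForm, Prod.smul_fst, Prod.smul_snd, dotProduct_smul, smul_eq_mul]; ring

lemma star_omegaForm (u v : SympSpace n) : star (omegaForm u v) = - omegaForm v u := by
  rw [omegaForm, omegaForm, star_sub, ← star_dotProduct, ← star_dotProduct]
  ring

/-- The complex structure `J (x, y) = (y, -x)`, for which `ω(u, v) = ⟨u, J v⟩`. -/
def sympJ (n : ℕ) : SympSpace n →ₗ[ℂ] SympSpace n where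
  toFun v := (v.2, -v.1)
  map_add' u v := by ext <;> simp [add_comm]
  map_smul' c v := by ext <;> simp

lemma sympJ_sympJ (v : SympSpace n) : sympJ n (sympJ n v) = -v := rfl

lemma omegaForm_sympJ_sympJ (u v : SympSpace n) :
    omegaForm (sympJ n u) (sympJ n v) = omegaForm u v := by
  simp only [omegaForm, sympJ, LinearMap.coe_mk, AddHom.coe_mk, star_neg, neg_dotProduct,
    dotProduct_neg]
  ring

/-- Since `ω(u, J u) = -⟨u, u⟩`, the form is definite along `J`. -/
lemma eq_zero_of_omegaForm_sympJ {u : SympSpace n} (h : omegaForm u (sympJ n u) = 0) : u = 0 := by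
  simp only [omegaForm, sympJ, LinearMap.coe_mk, AddHom.coe_mk, dotProduct_neg] at h
  have h1 : 0 ≤ star u.1 ⬝ᵥ u.1 := dotProduct_star_self_nonneg u.1
  have h2 : 0 ≤ star u.2 ⬝ᵥ u.2 := dotProduct_star_self_nonneg u.2
  have h3 : star u.1 ⬝ᵥ u.1 + star u.2 ⬝ᵥ u.2 = 0 := by linear_combination -h
  rw [add_eq_zero_iff_of_nonneg h1 h2, dotProduct_star_self_eq_zero,
    dotProduct_star_self_eq_zero] at h3
  exact Prod.ext h3.1 h3.2

lemma omegaForm_zero_right (u : SympSpace n) : omegaForm u 0 = 0 := by simp [omegaForm]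

lemma omegaForm_eq_zero_symm {u v : SympSpace n} (h : omegaForm u v = 0) : omegaForm v u = 0 := by
  have := star_omegaForm u v
  rw [h, star_zero] at this
  linear_combination this

/-- The orthogonal projection onto `W`; orthogonality to `W` is expressed through `ω` and `J`. -/
lemma exists_proj (W : Submodule ℂ (SympSpace n)) :
    ∃ p : SympSpace n →ₗ[ℂ] SympSpace n, (∀ v, p v ∈ W) ∧
      ∀ v, ∀ w ∈ W, omegaForm w (sympJ n (v - p v)) = 0 := by
  let ι : SympSpace n ≃ₗ[ℂ] EuclideanSpace ℂ (Fin n ⊕ Fin n) :=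
    (LinearEquiv.sumArrowLequivProdArrow (Fin n) (Fin n) ℂ ℂ).symm ≪≫ₗ
      (WithLp.linearEquiv 2 ℂ (Fin n ⊕ Fin n → ℂ)).symm
  have hι : ∀ u v : SympSpace n, omegaForm u (sympJ n v) = - inner ℂ (ι u) (ι v) := by
    intro u v
    have h : ∀ z : SympSpace n, (∀ i, ι z (Sum.inl i) = z.1 i) ∧ ∀ i, ι z (Sum.inr i) = z.2 i :=
      fun z => ⟨fun i => rfl, fun i => rfl⟩
    simp only [omegaForm, sympJ, LinearMap.coe_mk, AddHom.coe_mk, PiLp.inner_apply,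
      Fintype.sum_sum_type, h, dotProduct, RCLike.inner_apply', Pi.star_apply, Pi.neg_apply,
      mul_neg, Finset.sum_neg_distrib, RCLike.star_def]
    ring
  let K := W.map ι.toLinearMap
  refine ⟨ι.symm.toLinearMap ∘ₗ K.starProjection.toLinearMap ∘ₗ ι.toLinearMap, ?_, ?_⟩
  · intro v
    have h : K.starProjection (ι v) ∈ K := Submodule.starProjection_apply_mem K (ι v)
    obtain ⟨w, hw, hwe⟩ := h
    have : ι.symm (K.starProjection (ι v)) = w := by
      rw [← hwe]; simp
    simpa [this] using hw
  · intro v w hw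
    rw [hι]
    have h := Submodule.sub_starProjection_mem_orthogonal (K := K) (ι v)
    have h2 := (Submodule.mem_orthogonal K _).1 h (ι w) ⟨w, hw, rfl⟩
    have h3 : ι (v - ι.symm (K.starProjection (ι v))) = ι v - K.starProjection (ι v) := by simp
    change - inner ℂ (ι w) (ι (v - ι.symm (K.starProjection (ι v)))) = 0
    rw [h3, h2, neg_zero]

/-- `V = L ⊕ J L` for a Lagrangian `L`, whence `2 dim L = 2 n`. -/
lemma IsLagrangian.finrank_eq {L : Submodule ℂ (SympSpace n)} (hL : IsLagrangian L) :
    Module.finrank ℂ L = n := by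
  obtain ⟨p, hp, hp'⟩ := exists_proj L
  have hq : ∀ v, ((sympJ n) ∘ₗ (LinearMap.id - p)) v ∈ L := fun v =>
    (hL _).2 fun u hu => by simpa using hp' v u hu
  let f : SympSpace n →ₗ[ℂ] L × L := (p.codRestrict L hp).prod (LinearMap.codRestrict L _ hq)
  have hf : Function.Injective f := by
    rw [← LinearMap.ker_eq_bot, LinearMap.ker_eq_bot']
    intro v hv
    have h1 : p v = 0 := congrArg (fun z : L × L => (z.1 : SympSpace n)) hv
    have h2 : sympJ n (v - p v) = 0 := congrArg (fun z : L × L => (z.2 : SympSpace n)) hv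
    rw [h1, sub_zero] at h2
    have h3 := sympJ_sympJ v
    rw [h2, map_zero] at h3
    simpa using h3.symm
  let g : L × L →ₗ[ℂ] SympSpace n := L.subtype.coprod (sympJ n ∘ₗ L.subtype)
  have hg : Function.Injective g := by
    rw [← LinearMap.ker_eq_bot, LinearMap.ker_eq_bot']
    rintro ⟨a, b⟩ hab
    have hab' : (a : SympSpace n) + sympJ n b = 0 := hab
    have hb : sympJ n (b : SympSpace n) ∈ L := by
      rw [← neg_eq_of_add_eq_zero_right hab']
      exact L.neg_mem a.2
    have hb0 := eq_zero_of_omegaForm_sympJ ((hL _).1 hb b b.2)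
    rw [hb0, map_zero, add_zero] at hab'
    exact Prod.ext (Subtype.ext hab') (Subtype.ext hb0)
  have h1 := LinearMap.finrank_le_finrank_of_injective hf
  have h2 := LinearMap.finrank_le_finrank_of_injective hg
  simp only [Module.finrank_prod, Module.finrank_fin_fun] at h1 h2
  omega

lemma omegaForm_nondegenerate {v : SympSpace n} (h : ∀ u, omegaForm u v = 0) : v = 0 := by
  have h1 := h (sympJ n v)
  exact eq_zero_of_omegaForm_sympJ (omegaForm_eq_zero_symm h1)

end Form

/-! ### Normal form of a pair of Lagrangians -/

open scoped ComplexOrder in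
/-- Linear coordinates `A` on `L₁` extend to symplectic coordinates `T` in which
`L₂ = U ⊕ U^⊥`, where `U = A⁻¹ (L₁ ∩ L₂)`. -/
lemma exists_normal_form {n : ℕ} {L₁ L₂ : Submodule ℂ (SympSpace n)}
    (hL₁ : IsLagrangian L₁) (hL₂ : IsLagrangian L₂) (A : (Fin n → ℂ) ≃ₗ[ℂ] L₁) :
    ∃ T : SympSpace n ≃ₗ[ℂ] SympSpace n, IsSymplecticMap T ∧
      (∀ v, T v ∈ L₁ ↔ v.2 = 0) ∧
      (∀ v, T v ∈ L₂ ↔ (A v.1 : SympSpace n) ∈ L₂ ∧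
        ∀ x, (A x : SympSpace n) ∈ L₂ → star x ⬝ᵥ v.2 = 0) := by
  obtain ⟨p, hp, hp'⟩ := exists_proj (L₁ ⊓ L₂)
  -- `φ` sends `L₂ = L₂' ⊕ W` isomorphically onto `N = L₂' ⊕ J W`.
  let φ : SympSpace n →ₗ[ℂ] SympSpace n := LinearMap.id - p + sympJ n ∘ₗ p
  have hφ : ∀ l, φ l = (l - p l) + sympJ n (p l) := fun l => rfl
  have hsub : ∀ l ∈ L₂, l - p l ∈ L₂ := fun l hl => L₂.sub_mem hl (hp l).2
  have hiso : ∀ l ∈ L₂, ∀ l' ∈ L₂, omegaForm (φ l) (φ l') = 0 := by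
    intro l hl l' hl'
    have e1 := (hL₂ _).1 (hsub l' hl') _ (hsub l hl)
    have e2 : omegaForm (sympJ n (p l)) (sympJ n (p l')) = 0 := by
      rw [omegaForm_sympJ_sympJ]; exact (hL₂ _).1 (hp l').2 _ (hp l).2
    have e3 : ∀ a b, omegaForm (sympJ n (p a)) (b - p b) = 0 := by
      intro a b
      have := hp' b (p a) (hp a)
      rw [← omegaForm_sympJ_sympJ, sympJ_sympJ] at this
      have h4 := omegaForm_smul_right (sympJ n (p a)) (-1) (b - p b)
      rw [neg_one_smul, this] at h4
      linear_combination h4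
    rw [hφ, hφ, omegaForm_add_left, omegaForm_add_right, omegaForm_add_right, e1, e2, e3,
      omegaForm_eq_zero_symm (e3 l' l)]
    simp
  -- Pairing with `W` alone already detects the `J W` component of an element of `N`.
  have hW : ∀ l ∈ L₂, (∀ w ∈ L₁ ⊓ L₂, omegaForm w (φ l) = 0) → p l = 0 := by
    intro l hl h
    have h1 := h (p l) (hp l)
    rw [hφ, omegaForm_add_right, (hL₂ _).1 (hsub l hl) _ (hp l).2, zero_add] at h1
    exact eq_zero_of_omegaForm_sympJ h1
  let ψ₀ : SympSpace n →ₗ[ℂ] (Fin n → ℂ) :=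
    { toFun := fun v i => omegaForm (A (Pi.single i 1) : SympSpace n) v
      map_add' := fun u v => by ext i; exact omegaForm_add_right _ _ _
      map_smul' := fun c v => by ext i; exact omegaForm_smul_right _ _ _ }
  have hψ₀ : ∀ x v, star x ⬝ᵥ ψ₀ v = omegaForm (A x : SympSpace n) v := by
    intro x v
    let F : (Fin n → ℂ) →ₗ[ℂ] ℂ :=
      { toFun := fun x => omegaForm v (A x : SympSpace n)
        map_add' := fun a b => by simp [omegaForm_add_right]
        map_smul' := fun c a => by simp [omegaForm_smul_right] }
    have hF : F x = ∑ i, x i * F (Pi.single i 1) := by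
      conv_lhs => rw [pi_eq_sum_univ' x, map_sum]
      simp only [map_smul, smul_eq_mul]
    have h1 := star_omegaForm v (A x : SympSpace n)
    have h2 : omegaForm v (A x : SympSpace n) = F x := rfl
    rw [h2, hF, star_sum] at h1
    rw [← neg_inj, ← h1, dotProduct, ← Finset.sum_neg_distrib]
    refine Finset.sum_congr rfl fun i _ => ?_
    have h3 := star_omegaForm v (A (Pi.single i 1) : SympSpace n)
    change _ = star (x i * omegaForm v (A (Pi.single i 1) : SympSpace n))
    rw [star_mul', h3]
    simp [ψ₀]
  let ψ : L₂ →ₗ[ℂ] (Fin n → ℂ) := ψ₀ ∘ₗ φ ∘ₗ L₂.subtype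
  have hψ : ∀ x (l : L₂), star x ⬝ᵥ ψ l = omegaForm (A x : SympSpace n) (φ l) :=
    fun x l => hψ₀ x _
  have hψinj : Function.Injective ψ := by
    rw [← LinearMap.ker_eq_bot, LinearMap.ker_eq_bot']
    intro l hl
    have h1 : ∀ u ∈ L₁, omegaForm u (φ l) = 0 := by
      intro u hu
      have := hψ (A.symm ⟨u, hu⟩) l
      rw [hl] at this
      simpa using this.symm
    have h2 : p l = 0 := hW l l.2 fun w hw => h1 w hw.1
    have h3 : φ l = l := by rw [hφ, h2]; simp
    rw [h3] at h1
    have h4 : (l : SympSpace n) ∈ L₁ ⊓ L₂ := ⟨(hL₁ _).2 h1, l.2⟩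
    have h5 := hp' l l h4
    rw [h2, sub_zero] at h5
    exact Subtype.ext (eq_zero_of_omegaForm_sympJ h5)
  let Ψ : L₂ ≃ₗ[ℂ] (Fin n → ℂ) :=
    LinearEquiv.ofInjectiveOfFinrankEq ψ hψinj (by rw [hL₂.finrank_eq]; simp)
  have hΨ : ∀ l, Ψ l = ψ l := fun l => rfl
  let T₀ : SympSpace n →ₗ[ℂ] SympSpace n :=
    (L₁.subtype ∘ₗ A.toLinearMap).coprod (φ ∘ₗ L₂.subtype ∘ₗ Ψ.symm.toLinearMap)
  have hT₀ : ∀ v, T₀ v = (A v.1 : SympSpace n) + φ (Ψ.symm v.2 : L₂) := fun v => rfl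
  have hpair : ∀ x y, omegaForm (A x : SympSpace n) (φ (Ψ.symm y : L₂)) = star x ⬝ᵥ y := by
    intro x y
    rw [← hψ, ← hΨ, LinearEquiv.apply_symm_apply]
  have hsymp : ∀ u v, omegaForm (T₀ u) (T₀ v) = omegaForm u v := by
    intro u v
    have h1 := star_omegaForm (A v.1 : SympSpace n) (φ (Ψ.symm u.2 : L₂))
    rw [hpair] at h1
    have h2 : star (star v.1 ⬝ᵥ u.2) = star u.2 ⬝ᵥ v.1 := (star_dotProduct _ _).symm
    rw [h2] at h1
    rw [hT₀, hT₀, omegaForm_add_left, omegaForm_add_right, omegaForm_add_right, hpair,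
      hiso _ (Ψ.symm u.2).2 _ (Ψ.symm v.2).2, (hL₁ _).1 (A v.1).2 _ (A u.1).2]
    change _ = star u.1 ⬝ᵥ v.2 - star u.2 ⬝ᵥ v.1
    linear_combination h1
  have hinj : Function.Injective T₀ := by
    rw [← LinearMap.ker_eq_bot, LinearMap.ker_eq_bot']
    intro v hv
    refine omegaForm_nondegenerate fun u => ?_
    rw [← hsymp, hv, omegaForm_zero_right]
  refine ⟨LinearEquiv.ofInjectiveEndo T₀ hinj, hsymp, fun v => ?_, fun v => ?_⟩
  · change T₀ v ∈ L₁ ↔ _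
    constructor
    · intro h
      have h1 : ∀ x, star x ⬝ᵥ v.2 = 0 := by
        intro x
        rw [← hpair]
        refine (hL₁ _).1 ?_ _ (A x).2
        rw [hT₀] at h
        exact (L₁.add_mem_iff_right (A v.1).2).1 h
      exact dotProduct_star_self_eq_zero.1 (h1 v.2)
    · intro h
      rw [hT₀, h]
      simp
  · change T₀ v ∈ L₂ ↔ _
    have key : (∀ x, (A x : SympSpace n) ∈ L₂ → star x ⬝ᵥ v.2 = 0) →
        φ (Ψ.symm v.2 : L₂) ∈ L₂ := by
      intro h
      have h2 : p (Ψ.symm v.2 : L₂) = 0 := by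
        refine hW _ (Ψ.symm v.2).2 fun w hw => ?_
        have := hpair (A.symm ⟨w, hw.1⟩) v.2
        rw [h _ (by simpa using hw.2)] at this
        simpa using this
      rw [hφ, h2]
      simp
    constructor
    · intro h
      have h1 : ∀ x, (A x : SympSpace n) ∈ L₂ → star x ⬝ᵥ v.2 = 0 := by
        intro x hx
        have := (hL₂ _).1 h _ hx
        rwa [hT₀, omegaForm_add_right, (hL₁ _).1 (A v.1).2 _ (A x).2, zero_add, hpair] at this
      refine ⟨?_, h1⟩
      rw [hT₀] at h
      exact (L₂.add_mem_iff_left (key h1)).1 h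
    · rintro ⟨h1, h2⟩
      rw [hT₀]
      exact L₂.add_mem h1 (key h2)

/-! ### Matching two pairs -/

/-- Two subspaces of the same dimension, in spaces of the same dimension, correspond under some
linear isomorphism. -/
lemma exists_equiv_of_finrank_eq {V V' : Type*} [AddCommGroup V] [Module ℂ V]
    [FiniteDimensional ℂ V] [AddCommGroup V'] [Module ℂ V'] [FiniteDimensional ℂ V']
    (W : Submodule ℂ V) (W' : Submodule ℂ V')
    (hV : Module.finrank ℂ V = Module.finrank ℂ V')
    (hW : Module.finrank ℂ W = Module.finrank ℂ W') :
    ∃ e : V ≃ₗ[ℂ] V', ∀ v, e v ∈ W' ↔ v ∈ W := by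
  obtain ⟨C, hC⟩ := W.exists_isCompl
  obtain ⟨C', hC'⟩ := W'.exists_isCompl
  have h1 := Submodule.finrank_add_eq_of_isCompl hC
  have h2 := Submodule.finrank_add_eq_of_isCompl hC'
  let a := LinearEquiv.ofFinrankEq W W' hW
  have hCC : Module.finrank ℂ C = Module.finrank ℂ C' := by omega
  let b := LinearEquiv.ofFinrankEq C C' hCC
  let e := (W.prodEquivOfIsCompl C hC).symm ≪≫ₗ (a.prodCongr b) ≪≫ₗ W'.prodEquivOfIsCompl C' hC'
  have he : ∀ w ∈ W, e w ∈ W' := by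
    intro w hw
    have : (W.prodEquivOfIsCompl C hC).symm w = (⟨w, hw⟩, 0) :=
      Submodule.prodEquivOfIsCompl_symm_apply_left _ _ hC ⟨w, hw⟩
    simp [e, this]
  have hmap : W.map e.toLinearMap = W' := by
    refine Submodule.eq_of_le_of_finrank_eq ?_ ?_
    · rintro _ ⟨w, hw, rfl⟩
      exact he w hw
    · rw [← hW]; exact LinearEquiv.finrank_map_eq e W
  refine ⟨e, fun v => ⟨fun h => ?_, he v⟩⟩
  rw [← hmap] at h
  obtain ⟨w, hw, hwv⟩ := h
  rwa [← e.injective hwv]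

lemma finrank_comap_subtype_eq {n : ℕ} (L K : Submodule ℂ (SympSpace n)) :
    Module.finrank ℂ (K.comap L.subtype) = Module.finrank ℂ ↥(L ⊓ K) := by
  rw [← Submodule.map_comap_subtype, Submodule.finrank_map_subtype_eq]

/-- Two pairs of Lagrangian planes are symplectically equivalent iff the dimensions of
their intersections match. -/
theorem symplectic_equivalence_of_pairs (n : ℕ) (hn : 1 ≤ n)
    (L₁ L₂ M₁ M₂ : Submodule ℂ (SympSpace n))
    (hL₁ : IsLagrangian L₁) (hL₂ : IsLagrangian L₂)
    (hM₁ : IsLagrangian M₁) (hM₂ : IsLagrangian M₂) :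
    (∃ S : SympSpace n ≃ₗ[ℂ] SympSpace n, IsSymplecticMap S ∧
        L₁.map S.toLinearMap = M₁ ∧ L₂.map S.toLinearMap = M₂) ↔
      Module.finrank ℂ ↥(L₁ ⊓ L₂) = Module.finrank ℂ ↥(M₁ ⊓ M₂) := by
  constructor
  · rintro ⟨S, -, rfl, rfl⟩
    rw [← Submodule.map_inf _ S.injective]
    exact (LinearEquiv.finrank_map_eq S _).symm
  · intro h
    obtain ⟨e, he⟩ := exists_equiv_of_finrank_eq (L₂.comap L₁.subtype) (M₂.comap M₁.subtype)
      (by rw [hL₁.finrank_eq, hM₁.finrank_eq])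
      (by rw [finrank_comap_subtype_eq, finrank_comap_subtype_eq, h])
    have he' : ∀ v : L₁, (e v : SympSpace n) ∈ M₂ ↔ (v : SympSpace n) ∈ L₂ := he
    let A : (Fin n → ℂ) ≃ₗ[ℂ] L₁ := LinearEquiv.ofFinrankEq _ _ (by rw [hL₁.finrank_eq]; simp)
    obtain ⟨T, hT, hT1, hT2⟩ := exists_normal_form hL₁ hL₂ A
    obtain ⟨R, hR, hR1, hR2⟩ := exists_normal_form hM₁ hM₂ (A ≪≫ₗ e)
    simp only [LinearEquiv.trans_apply, he'] at hR2
    have hmap : ∀ L M : Submodule ℂ (SympSpace n), (∀ v, T v ∈ L ↔ R v ∈ M) →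
        L.map (T.symm ≪≫ₗ R).toLinearMap = M := by
      intro L M hLM
      ext v
      constructor
      · rintro ⟨u, hu, rfl⟩
        have := (hLM (T.symm u)).1 (by simpa using hu)
        simpa using this
      · intro hv
        exact ⟨T (R.symm v), (hLM _).2 (by simpa using hv), by simp⟩
    refine ⟨T.symm ≪≫ₗ R, fun u v => ?_, hmap _ _ fun v => ?_, hmap _ _ fun v => ?_⟩
    · rw [LinearEquiv.trans_apply, LinearEquiv.trans_apply, hR, ← hT]
      simp
    · rw [hT1, hR1]
    · rw [hT2, hR2]
end
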